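/- Let k ≥ 2 and for each n ≥ 0 let α_n ∈ ℝ^k be nonzero with λ_n = ‖α_n‖. Let W_0 be a real random variable with E W_0 = 0 and Var W_0 = 1, and define recursively W_{n+1} = Σ_{i=1}^k (α_{n,i}/λ_n) W_{n,i}, where W_{n,1},…,W_{n,k} are independent copies of W_n (so each W_n has mean 0 and variance 1). For each n let W_n* have the W_n-zero biased distribution, and set φ_n = Σ_{i=1}^k |α_{n,i}|³/λ_n³. Then for all n ≥ 1, d(W_n, W_n*) ≤ (∏_{i=0}^{n-1} φ_i) · d(W_0, W_0*), where d is the Wasserstein distance. -/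

import Mathlib

/-!
Write `W' = ∑ i, a i * X i` with i.i.d. `X i` of law `μ` and `∑ i, a i ^ 2 = 1`. Conditioning on
all summands but the `i`-th and applying the zero-bias identity of `μ` in that coordinate gives,
for `F' = h` bounded and continuous,
`E[W' F(W')] = ∑ i, a i * E[X i * F(W')] = ∑ i, a i ^ 2 * E[h(S i + a i * X*)]`, where
`S i = ∑_{j ≠ i} a j * X j` is independent of `X*`. Hence the zero-biased law of `W'` is the
mixture with weights `a i ^ 2` of the laws of `S i + a i * X*` (`zeroBias_mixture`).

For a 1-Lipschitz `h`, comparing `E h(W') = ∑ i, a i ^ 2 * E h(S i + a i * X i)` with this mixture,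
and using that `y ↦ h(s + a i * y)` is `|a i|`-Lipschitz for each fixed `s`, yields the factor
`∑ i, |a i| ^ 3` (`zeroBias_step`). The theorem follows by induction, the second moment being
preserved by the recursion.

No third moment is assumed, so the zero-biased law may lack a first moment and the supremum
defining the distance may be infinite, in which case its real value is `0`. This is harmless:
if the supremum for `W'` is finite then its zero-biased law has a first moment
(`integrable_of_bddAbove`), and by the mixture formula so does that of `X`; if it is infinite then
the left-hand side is `0`.
-/

open MeasureTheory

/-- The Wasserstein distance between two distributions on `ℝ`:
`d(μ, ν) = sup_h |∫ h dμ − ∫ h dν|`, the supremum over 1-Lipschitz `h : ℝ → ℝ`. -/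
noncomputable def wassersteinDist (μ ν : Measure ℝ) : ℝ :=
  ⨆ h : { h : ℝ → ℝ // LipschitzWith 1 h }, |(∫ x, h.1 x ∂μ) - ∫ x, h.1 x ∂ν|

/-- `ν` is the `μ`-zero biased distribution (for `μ` of mean zero and variance `σ²`):
`∫ x f(x) dμ = σ² ∫ f' dν` for every absolutely continuous `f` (written as the
indefinite integral of a locally interval-integrable `f'`) for which `∫ x f(x) dμ`
exists. -/
def IsZeroBiased (μ : Measure ℝ) (σ2 : ℝ) (ν : Measure ℝ) : Prop :=
  ∀ f f' : ℝ → ℝ,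
    (∀ x : ℝ, IntervalIntegrable f' volume 0 x) →
    (∀ x : ℝ, f x = f 0 + ∫ t in (0 : ℝ)..x, f' t) →
    Integrable (fun x => x * f x) μ → Integrable f' ν →
    ∫ x, x * f x ∂μ = σ2 * ∫ x, f' x ∂ν

section

open Filter Topology
open scoped BoundedContinuousFunction

/-! ### Isolating one summand of a weighted i.i.d. sum -/

/-- The law of `∑_{j ≠ i} a j * X j` for i.i.d. `X j` of law `μ`. -/
noncomputable def restLaw {m : ℕ} (a : Fin (m + 1) → ℝ) (μ : Measure ℝ) (i : Fin (m + 1)) :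
    Measure ℝ :=
  (Measure.pi fun _ : Fin m => μ).map (fun z => ∑ j, a (i.succAbove j) * z j)

/-- The law of `c * Y + S` for independent `Y` of law `ν` and `S` of law `ρ`. -/
noncomputable def affineLaw (c : ℝ) (ν ρ : Measure ℝ) : Measure ℝ :=
  (ν.prod ρ).map (fun p => c * p.1 + p.2)

instance {m : ℕ} (a : Fin (m + 1) → ℝ) (μ : Measure ℝ) [IsProbabilityMeasure μ]
    (i : Fin (m + 1)) : IsProbabilityMeasure (restLaw a μ i) :=
  Measure.isProbabilityMeasure_map (Measurable.aemeasurable (by fun_prop))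

instance (c : ℝ) (ν ρ : Measure ℝ) [IsProbabilityMeasure ν] [IsProbabilityMeasure ρ] :
    IsProbabilityMeasure (affineLaw c ν ρ) :=
  Measure.isProbabilityMeasure_map (by fun_prop)

lemma measurePreserving_split {m : ℕ} (a : Fin (m + 1) → ℝ) (μ : Measure ℝ)
    [IsProbabilityMeasure μ] (i : Fin (m + 1)) :
    MeasurePreserving
      (fun x : Fin (m + 1) → ℝ => (x i, ∑ j, a (i.succAbove j) * x (i.succAbove j)))
      (Measure.pi fun _ => μ) (μ.prod (restLaw a μ i)) := by
  have h1 := measurePreserving_piFinSuccAbove (fun _ : Fin (m + 1) => μ) i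
  have h2 : MeasurePreserving (fun z : Fin m → ℝ => ∑ j, a (i.succAbove j) * z j)
      (Measure.pi fun _ : Fin m => μ) (restLaw a μ i) := ⟨by fun_prop, rfl⟩
  have h3 := (MeasurePreserving.id μ).prod h2
  exact h3.comp h1

lemma memLp_eval {ι : Type*} [Fintype ι] (μ : Measure ℝ) [IsProbabilityMeasure μ]
    (hμ : MemLp (fun x : ℝ => x) 2 μ) (i : ι) :
    MemLp (fun x : ι → ℝ => x i) 2 (Measure.pi fun _ => μ) :=
  hμ.comp_measurePreserving (measurePreserving_eval (fun _ : ι => μ) i)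

lemma memLp_linear {ι : Type*} [Fintype ι] (b : ι → ℝ) (μ : Measure ℝ) [IsProbabilityMeasure μ]
    (hμ : MemLp (fun x : ℝ => x) 2 μ) :
    MemLp (fun x : ι → ℝ => ∑ i, b i * x i) 2 (Measure.pi fun _ => μ) :=
  memLp_finsetSum _ fun i _ => (memLp_eval μ hμ i).const_mul (b i)

lemma memLp_map_linear {ι : Type*} [Fintype ι] (b : ι → ℝ) (μ : Measure ℝ)
    [IsProbabilityMeasure μ] (hμ : MemLp (fun x : ℝ => x) 2 μ) :
    MemLp (fun x : ℝ => x) 2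
      ((Measure.pi fun _ : ι => μ).map (fun x => ∑ i, b i * x i)) :=
  (memLp_map_measure_iff (by fun_prop) (Measurable.aemeasurable (by fun_prop))).2
    (memLp_linear b μ hμ)

lemma affineLaw_restLaw {m : ℕ} (a : Fin (m + 1) → ℝ) (μ : Measure ℝ)
    [IsProbabilityMeasure μ] (i : Fin (m + 1)) :
    affineLaw (a i) μ (restLaw a μ i) =
      (Measure.pi fun _ : Fin (m + 1) => μ).map (fun x => ∑ j, a j * x j) := by
  rw [affineLaw, ← (measurePreserving_split a μ i).map_eq, Measure.map_map (by fun_prop)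
    (by fun_prop)]
  congr 1
  ext x
  simp [Fin.sum_univ_succAbove _ i]

/-! ### The zero-biased law of a sum as a mixture -/

/-- The zero-bias identity applied to `y ↦ F (c * y + s)`, where `F' = h` is bounded. -/
lemma zeroBias_affine {μ ν : Measure ℝ} [IsProbabilityMeasure μ] [IsProbabilityMeasure ν]
    (hμ : MemLp (fun x : ℝ => x) 2 μ) (hzb : IsZeroBiased μ 1 ν) (h : ℝ →ᵇ ℝ) {F : ℝ → ℝ}
    {C : ℝ} (hF : ∀ x, HasDerivAt F (h x) x) (hFC : ∀ x, |F x| ≤ C * |x|) (c s : ℝ) :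
    ∫ y, y * F (c * y + s) ∂μ = c * ∫ y, h (c * y + s) ∂ν := by
  have hFc : Continuous F := continuous_iff_continuousAt.2 fun x => (hF x).continuousAt
  have hd : ∀ x, HasDerivAt (fun y => F (c * y + s)) (c * h (c * x + s)) x := by
    intro x
    have h1 : HasDerivAt (fun y : ℝ => c * y + s) c x := by
      simpa using ((hasDerivAt_id x).const_mul c).add_const s
    simpa [mul_comm, Function.comp_def] using (hF (c * x + s)).comp x h1
  have hcont : Continuous fun x => c * h (c * x + s) := by fun_prop
  have hint : MemLp (fun y => F (c * y + s)) 2 μ := by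
    have h1 : MemLp (fun y => c * y + s) 2 μ := (hμ.const_mul c).add (memLp_const s)
    exact h1.of_le_mul (c := C) (by fun_prop) (.of_forall fun x => hFC _)
  have key := hzb (fun y => F (c * y + s)) (fun y => c * h (c * y + s))
    (fun x => hcont.intervalIntegrable _ _)
    (fun x => by
      rw [intervalIntegral.integral_eq_sub_of_hasDerivAt (fun y _ => hd y)
        (hcont.intervalIntegrable _ _)]
      ring)
    (hμ.integrable_mul hint)
    (by
      refine Integrable.const_mul ?_ c
      refine Integrable.of_bound (by fun_prop) ‖h‖ (.of_forall fun x => h.norm_coe_le_norm _))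
  rw [key, one_mul, integral_const_mul]

lemma exists_primitive (h : ℝ →ᵇ ℝ) :
    ∃ F : ℝ → ℝ, (∀ x, HasDerivAt F (h x) x) ∧ ∀ x, |F x| ≤ ‖h‖ * |x| := by
  refine ⟨fun x => ∫ t in (0 : ℝ)..x, h t, fun x => ?_, fun x => ?_⟩
  · exact intervalIntegral.integral_hasDerivAt_right (h.continuous.intervalIntegrable _ _)
      (h.continuous.stronglyMeasurableAtFilter _ _) h.continuous.continuousAt
  · simpa using intervalIntegral.norm_integral_le_of_norm_le_const (a := 0) (b := x) (f := h)
      (C := ‖h‖) (fun t _ => h.norm_coe_le_norm t)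

/-- The zero-biased law of a sum is a mixture: with weight `a i ^ 2`, the `i`-th summand is
replaced by its zero-biased version. -/
lemma zeroBias_mixture {m : ℕ} (a : Fin (m + 1) → ℝ) {μ ν ν' : Measure ℝ}
    [IsProbabilityMeasure μ] [IsProbabilityMeasure ν]
    [IsProbabilityMeasure ν'] (hμ : MemLp (fun x : ℝ => x) 2 μ) (hzb : IsZeroBiased μ 1 ν)
    (hzb' : IsZeroBiased
      ((Measure.pi fun _ : Fin (m + 1) => μ).map (fun x => ∑ j, a j * x j)) 1 ν') :
    ν' = ∑ i, Real.toNNReal (a i ^ 2) • affineLaw (a i) ν (restLaw a μ i) := by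
  apply ext_of_forall_integral_eq_of_IsFiniteMeasure
  intro h
  obtain ⟨F, hF, hFC⟩ := exists_primitive h
  have hFc : Continuous F := continuous_iff_continuousAt.2 fun x => (hF x).continuousAt
  have : IsProbabilityMeasure
      ((Measure.pi fun _ : Fin (m + 1) => μ).map (fun x => ∑ j, a j * x j)) :=
    Measure.isProbabilityMeasure_map (Measurable.aemeasurable (by fun_prop))
  have hW : MemLp (fun x : Fin (m + 1) → ℝ => F (∑ j, a j * x j)) 2
      (Measure.pi fun _ : Fin (m + 1) => μ) :=
    (memLp_linear a μ hμ).of_le_mul (c := ‖h‖)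
      (Continuous.aestronglyMeasurable (by fun_prop)) (.of_forall fun x => hFC _)
  have h0 := zeroBias_affine (memLp_map_linear a μ hμ) hzb' h hF hFC 1 0
  simp only [one_mul, add_zero] at h0
  have hbd : ∀ κ : Measure ℝ, IsFiniteMeasure κ → Integrable h κ := fun κ _ => h.integrable κ
  rw [← h0, integral_map (Measurable.aemeasurable (by fun_prop))
      (Continuous.aestronglyMeasurable (by fun_prop)),
    integral_finsetSum_measure (fun i _ => hbd _ inferInstance)]
  simp_rw [Finset.sum_mul]
  have hprod : ∀ i, Integrable (fun x : Fin (m + 1) → ℝ => x i * F (∑ j, a j * x j))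
      (Measure.pi fun _ : Fin (m + 1) => μ) := fun i => (memLp_eval μ hμ i).integrable_mul hW
  rw [integral_finsetSum _ (fun i _ => by simpa only [mul_assoc] using (hprod i).const_mul (a i))]
  refine Finset.sum_congr rfl fun i _ => ?_
  simp_rw [mul_assoc]
  rw [integral_const_mul, integral_smul_nnreal_measure, NNReal.smul_def,
    Real.coe_toNNReal _ (sq_nonneg _), smul_eq_mul]
  have hsp := measurePreserving_split a μ i
  have hg : AEStronglyMeasurable (fun p : ℝ × ℝ => p.1 * F (a i * p.1 + p.2))
      (μ.prod (restLaw a μ i)) := Continuous.aestronglyMeasurable (by fun_prop)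
  have e1 : ∫ x : Fin (m + 1) → ℝ, x i * F (∑ j, a j * x j) ∂(Measure.pi fun _ => μ) =
      ∫ p : ℝ × ℝ, p.1 * F (a i * p.1 + p.2) ∂(μ.prod (restLaw a μ i)) := by
    rw [← hsp.map_eq] at hg ⊢
    rw [integral_map hsp.measurable.aemeasurable hg]
    simp_rw [Fin.sum_univ_succAbove _ i]
  have hi : Integrable (fun p : ℝ × ℝ => p.1 * F (a i * p.1 + p.2))
      (μ.prod (restLaw a μ i)) := by
    rw [← hsp.map_eq] at hg ⊢
    rw [integrable_map_measure hg hsp.measurable.aemeasurable]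
    have := hprod i
    simp_rw [Fin.sum_univ_succAbove _ i] at this
    exact this
  rw [e1, integral_prod_symm _ hi]
  simp_rw [zeroBias_affine hμ hzb h hF hFC]
  rw [integral_const_mul, affineLaw, integral_map (by fun_prop)
    (Continuous.aestronglyMeasurable (by fun_prop)), integral_prod_symm]
  · ring
  · exact Integrable.of_bound (Continuous.aestronglyMeasurable (by fun_prop)) ‖h‖
      (.of_forall fun x => h.norm_coe_le_norm _)

/-! ### Wasserstein distance and first moments -/

lemma LipschitzWith.integrable_of_id {h : ℝ → ℝ} {K : NNReal} (hh : LipschitzWith K h)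
    {μ : Measure ℝ} [IsFiniteMeasure μ] (hμ : Integrable (fun x : ℝ => x) μ) :
    Integrable h μ := by
  refine Integrable.mono' (g := fun x => K * |x| + |h 0|) ?_
    hh.continuous.aestronglyMeasurable (.of_forall fun x => ?_)
  · exact (hμ.abs.const_mul _).add (integrable_const _)
  · have := hh.dist_le_mul x 0
    rw [Real.dist_eq, Real.dist_eq, sub_zero] at this
    have h2 := abs_sub_abs_le_abs_sub (h x) (h 0)
    rw [Real.norm_eq_abs]
    linarith

lemma wassersteinDist_nonneg (μ ν : Measure ℝ) : 0 ≤ wassersteinDist μ ν :=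
  Real.iSup_nonneg fun _ => abs_nonneg _

lemma bddAbove_wasserstein {μ ν : Measure ℝ} [IsProbabilityMeasure μ] [IsProbabilityMeasure ν]
    (hμ : Integrable (fun x : ℝ => x) μ) (hν : Integrable (fun x : ℝ => x) ν) :
    BddAbove (Set.range fun h : { h : ℝ → ℝ // LipschitzWith 1 h } =>
      |(∫ x, h.1 x ∂μ) - ∫ x, h.1 x ∂ν|) := by
  have aux : ∀ (κ : Measure ℝ) [IsProbabilityMeasure κ], Integrable (fun x : ℝ => x) κ →
      ∀ h : ℝ → ℝ, LipschitzWith 1 h → |(∫ x, h x ∂κ) - h 0| ≤ ∫ x, |x| ∂κ := by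
    intro κ _ hκ h hh
    have : (∫ x, h x ∂κ) - h 0 = ∫ x, (h x - h 0) ∂κ := by
      rw [integral_sub (hh.integrable_of_id hκ) (integrable_const _)]; simp
    rw [this]
    refine norm_integral_le_of_norm_le (f := fun x => h x - h 0) hκ.abs (.of_forall fun x => ?_)
    simpa [Real.dist_eq] using hh.dist_le_mul x 0
  refine ⟨(∫ x, |x| ∂μ) + ∫ x, |x| ∂ν, ?_⟩
  rintro _ ⟨⟨h, hh⟩, rfl⟩
  have h1 := abs_le.1 (aux μ hμ h hh)
  have h2 := abs_le.1 (aux ν hν h hh)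
  exact abs_le.2 ⟨by linarith, by linarith⟩

/-- When `d(μ, ν)` is a supremum of a bounded set and `μ` has a first moment, so does `ν`. -/
lemma integrable_of_bddAbove {μ ν : Measure ℝ} [IsProbabilityMeasure μ] [IsProbabilityMeasure ν]
    (hμ : Integrable (fun x : ℝ => x) μ)
    (hb : BddAbove (Set.range fun h : { h : ℝ → ℝ // LipschitzWith 1 h } =>
      |(∫ x, h.1 x ∂μ) - ∫ x, h.1 x ∂ν|)) :
    Integrable (fun x : ℝ => x) ν := by
  obtain ⟨B, hB⟩ := hb
  -- Test against the bounded Lipschitz truncations `min |x| n` and let `n → ∞` by Fatou.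
  have hlip : ∀ n : ℕ, LipschitzWith 1 (fun x : ℝ => min |x| (n : ℝ)) := fun n => by
    simpa [Real.norm_eq_abs] using (lipschitzWith_one_norm (E := ℝ)).min_const (n : ℝ)
  have hint : ∀ (n : ℕ) (κ : Measure ℝ) [IsProbabilityMeasure κ],
      Integrable (fun x : ℝ => min |x| (n : ℝ)) κ := by
    intro n κ _
    refine Integrable.of_bound (Continuous.aestronglyMeasurable (by fun_prop)) (n : ℝ)
      (.of_forall fun x => ?_)
    rw [Real.norm_of_nonneg (by positivity)]
    exact min_le_right _ _
  have hbound : ∀ n : ℕ, ∫ x, min |x| (n : ℝ) ∂ν ≤ B + ∫ x, |x| ∂μ := by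
    intro n
    have h1 := (abs_le.1 (hB ⟨⟨_, hlip n⟩, rfl⟩)).1
    have h2 : ∫ x, min |x| (n : ℝ) ∂μ ≤ ∫ x, |x| ∂μ :=
      integral_mono (hint n μ) hμ.abs fun x => min_le_left _ _
    simp only at h1
    linarith
  have habs : Integrable (fun x : ℝ => |x|) ν := by
    refine integrable_of_tendsto (G := fun n x => min |x| (n : ℝ)) (.of_forall fun x => ?_)
      (fun n => (hint n ν).aestronglyMeasurable) ?_
    · refine tendsto_const_nhds.congr' ?_
      filter_upwards [eventually_ge_atTop ⌈|x|⌉₊] with n hn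
      exact (min_eq_left (Nat.ceil_le.1 hn)).symm
    · refine ne_top_of_le_ne_top (b := ENNReal.ofReal (B + ∫ x, |x| ∂μ)) ENNReal.ofReal_ne_top ?_
      refine liminf_le_of_le (by isBoundedDefault) fun b hb => ?_
      obtain ⟨n, hn⟩ := hb.exists
      refine hn.trans ?_
      rw [← ofReal_integral_norm_eq_lintegral_enorm (hint n ν)]
      refine ENNReal.ofReal_le_ofReal ((le_of_eq ?_).trans (hbound n))
      exact integral_congr_ae (.of_forall fun x => Real.norm_of_nonneg (by positivity))
  exact (integrable_norm_iff (by fun_prop)).1 habs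

/-! ### The contraction -/

/-- The map `y ↦ h (c * y + s)` is `|c|`-Lipschitz; the first moments make the supremum finite. -/
lemma wasserstein_lipschitz {μ ν : Measure ℝ} [IsProbabilityMeasure μ] [IsProbabilityMeasure ν]
    (hμ : Integrable (fun x : ℝ => x) μ) (hν : Integrable (fun x : ℝ => x) ν)
    {h : ℝ → ℝ} (hh : LipschitzWith 1 h) (c s : ℝ) :
    |(∫ y, h (c * y + s) ∂μ) - ∫ y, h (c * y + s) ∂ν| ≤ |c| * wassersteinDist μ ν := by
  rcases eq_or_ne c 0 with rfl | hc
  · simp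
  have hc' : 0 < |c| := abs_pos.2 hc
  have hl : LipschitzWith 1 (fun y => |c|⁻¹ * h (c * y + s)) := by
    refine LipschitzWith.of_dist_le_mul fun x y => ?_
    have h1 := hh.dist_le_mul (c * x + s) (c * y + s)
    rw [Real.dist_eq, Real.dist_eq] at h1 ⊢
    rw [← mul_sub, abs_mul, abs_of_pos (inv_pos.2 hc'), inv_mul_le_iff₀ hc']
    rw [show c * x + s - (c * y + s) = c * (x - y) by ring, abs_mul] at h1
    simpa using h1
  have h2 := le_ciSup (bddAbove_wasserstein hμ hν) ⟨_, hl⟩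
  simp only [integral_const_mul] at h2
  rw [← mul_sub, abs_mul, abs_of_pos (inv_pos.2 hc'), inv_mul_le_iff₀ hc'] at h2
  exact h2

/-- One step of the recursion contracts the distance to the zero-biased law by `∑ |a i| ^ 3`. -/
lemma zeroBias_step {m : ℕ} (a : Fin (m + 1) → ℝ) (ha : ∑ i, a i ^ 2 = 1)
    {μ μ' ν ν' : Measure ℝ} [IsProbabilityMeasure μ] [IsProbabilityMeasure ν]
    [IsProbabilityMeasure μ'] [IsProbabilityMeasure ν'] (hμ : MemLp (fun x : ℝ => x) 2 μ)
    (hμ' : μ' = (Measure.pi fun _ : Fin (m + 1) => μ).map (fun x => ∑ j, a j * x j))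
    (hzb : IsZeroBiased μ 1 ν) (hzb' : IsZeroBiased μ' 1 ν') :
    wassersteinDist μ' ν' ≤ (∑ i, |a i| ^ 3) * wassersteinDist μ ν := by
  have hmix := zeroBias_mixture a hμ hzb (hμ' ▸ hzb')
  have hμi : Integrable (fun x : ℝ => x) μ := hμ.integrable (by norm_num)
  have hμi' : Integrable (fun x : ℝ => x) μ' := by
    rw [hμ']; exact (memLp_map_linear a μ hμ).integrable (by norm_num)
  have hρ : ∀ i, Integrable (fun x : ℝ => x) (restLaw a μ i) := fun i =>
    (memLp_map_linear (fun j => a (i.succAbove j)) μ hμ).integrable (by norm_num)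
  have hnn : 0 ≤ (∑ i, |a i| ^ 3) * wassersteinDist μ ν :=
    mul_nonneg (by positivity) (wassersteinDist_nonneg _ _)
  by_cases hb : BddAbove (Set.range fun h : { h : ℝ → ℝ // LipschitzWith 1 h } =>
      |(∫ x, h.1 x ∂μ') - ∫ x, h.1 x ∂ν'|)
  swap
  -- The real-valued supremum of an unbounded set is `0`.
  · rw [wassersteinDist, Real.iSup_of_not_bddAbove hb]; exact hnn
  have hνi' := integrable_of_bddAbove hμi' hb
  have hνi : Integrable (fun x : ℝ => x) ν := by
    obtain ⟨i, hi⟩ : ∃ i, a i ≠ 0 := by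
      by_contra! hcon
      simp [hcon] at ha
    rw [hmix, integrable_finsetSum_measure] at hνi'
    have h1 := hνi' i (Finset.mem_univ i)
    have hpos : Real.toNNReal (a i ^ 2) ≠ 0 := by
      simpa [Real.toNNReal_eq_zero] using hi
    have h2 : Integrable (fun x : ℝ => x) (affineLaw (a i) ν (restLaw a μ i)) :=
      (integrable_smul_measure (c := ((Real.toNNReal (a i ^ 2) : NNReal) : ENNReal))
        (by simpa using hpos) ENNReal.coe_ne_top).1 h1
    rw [affineLaw, integrable_map_measure (by fun_prop) (by fun_prop)] at h2
    obtain ⟨s, hs⟩ := h2.prod_left_ae.exists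
    have h3 : Integrable (fun y => (a i)⁻¹ * ((a i * y + s) - s)) ν :=
      (Integrable.sub hs (integrable_const s)).const_mul _
    simpa [hi] using h3
  refine Real.iSup_le ?_ hnn
  rintro ⟨h, hh⟩
  simp only
  have hint : ∀ (κ : Measure ℝ) [IsProbabilityMeasure κ], Integrable (fun x : ℝ => x) κ → ∀ i,
      Integrable (fun p : ℝ × ℝ => h (a i * p.1 + p.2)) (κ.prod (restLaw a μ i)) := by
    intro κ _ hκ i
    have h1 : Integrable (fun p : ℝ × ℝ => a i * p.1 + p.2) (κ.prod (restLaw a μ i)) :=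
      ((hκ.comp_fst _).const_mul _).add ((hρ i).comp_snd _)
    have h2 : Integrable (fun x : ℝ => x) (affineLaw (a i) κ (restLaw a μ i)) :=
      (integrable_map_measure (by fun_prop) (by fun_prop)).2 h1
    exact (hh.integrable_of_id h2).comp_measurable (by fun_prop)
  have hval : ∀ (κ : Measure ℝ) [IsProbabilityMeasure κ], Integrable (fun x : ℝ => x) κ → ∀ i,
      ∫ x, h x ∂(affineLaw (a i) κ (restLaw a μ i)) =
        ∫ s, ∫ y, h (a i * y + s) ∂κ ∂(restLaw a μ i) := by
    intro κ _ hκ i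
    rw [affineLaw, integral_map (by fun_prop) hh.continuous.aestronglyMeasurable,
      integral_prod_symm _ (hint κ hκ i)]
  have hνh : ∫ x, h x ∂ν' =
      ∑ i, a i ^ 2 * ∫ s, ∫ y, h (a i * y + s) ∂ν ∂(restLaw a μ i) := by
    have hI := hh.integrable_of_id hνi'
    rw [hmix, integrable_finsetSum_measure] at hI
    rw [hmix, integral_finsetSum_measure hI]
    refine Finset.sum_congr rfl fun i _ => ?_
    rw [integral_smul_nnreal_measure, NNReal.smul_def, Real.coe_toNNReal _ (sq_nonneg _),
      smul_eq_mul, hval ν hνi]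
  -- The law of the sum itself is the mixture of copies of itself, split at each coordinate.
  have hμh : ∫ x, h x ∂μ' =
      ∑ i, a i ^ 2 * ∫ s, ∫ y, h (a i * y + s) ∂μ ∂(restLaw a μ i) := by
    have h1 : ∀ i, ∫ s, ∫ y, h (a i * y + s) ∂μ ∂(restLaw a μ i) = ∫ x, h x ∂μ' := fun i => by
      rw [← hval μ hμi, affineLaw_restLaw, hμ']
    simp_rw [h1]
    rw [← Finset.sum_mul, ha, one_mul]
  rw [hνh, hμh, ← Finset.sum_sub_distrib, Finset.sum_mul]
  refine (Finset.abs_sum_le_sum_abs _ _).trans (Finset.sum_le_sum fun i _ => ?_)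
  rw [← mul_sub, abs_mul, abs_of_nonneg (sq_nonneg (a i)),
    ← integral_sub (hint μ hμi i).integral_prod_right (hint ν hνi i).integral_prod_right]
  have h4 : |∫ s, ((∫ y, h (a i * y + s) ∂μ) - ∫ y, h (a i * y + s) ∂ν) ∂(restLaw a μ i)| ≤
      |a i| * wassersteinDist μ ν := by
    have := norm_integral_le_of_norm_le_const (μ := restLaw a μ i)
      (f := fun s => (∫ y, h (a i * y + s) ∂μ) - ∫ y, h (a i * y + s) ∂ν)
      (.of_forall fun s => wasserstein_lipschitz hμi hνi hh (a i) s)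
    simpa using this
  calc a i ^ 2 * _ ≤ a i ^ 2 * (|a i| * wassersteinDist μ ν) := by gcongr
    _ = |a i| ^ 3 * wassersteinDist μ ν := by rw [← sq_abs]; ring

end

/-- for the hierarchical recursion `W_{n+1} = Σ_i (α_{n,i}/λ_n) W_{n,i}`
(in distribution, with i.i.d. components), with `μ n` the law of `W_n`, `ν n` the law
of the zero biased `W_n*`, and `φ_n = Σ_i |α_{n,i}|³/λ_n³`, we have for all `n ≥ 1`
`d(W_n, W_n*) ≤ (∏_{i<n} φ_i) d(W₀, W₀*)`. -/
theorem zeroBias_iterated_contraction {k : ℕ} (hk : 2 ≤ k)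
    (α : ℕ → Fin k → ℝ) (hα : ∀ n, α n ≠ 0)
    (lam : ℕ → ℝ) (hlam : ∀ n, lam n = Real.sqrt (∑ i, α n i ^ 2))
    (μ : ℕ → Measure ℝ) [∀ n, IsProbabilityMeasure (μ n)]
    (hmean : ∫ x, x ∂μ 0 = 0) (hm2 : Integrable (fun x => x ^ 2) (μ 0))
    (hvar : ∫ x, x ^ 2 ∂μ 0 = 1)
    (hrec : ∀ n, μ (n + 1) =
      Measure.map (fun x : Fin k → ℝ => ∑ i, (α n i / lam n) * x i)
        (Measure.pi fun _ : Fin k => μ n))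
    (ν : ℕ → Measure ℝ) [∀ n, IsProbabilityMeasure (ν n)]
    (hzb : ∀ n, IsZeroBiased (μ n) 1 (ν n))
    (φ : ℕ → ℝ) (hφ : ∀ n, φ n = (∑ i, |α n i| ^ 3) / lam n ^ 3) :
    ∀ n : ℕ, 1 ≤ n →
      wassersteinDist (μ n) (ν n) ≤
        (∏ i ∈ Finset.range n, φ i) * wassersteinDist (μ 0) (ν 0) := by
  -- The second moment propagates along the recursion.
  have hL2 : ∀ n, MemLp (fun x : ℝ => x) 2 (μ n) := by
    intro n
    induction n with
    | zero => exact (memLp_two_iff_integrable_sq (by fun_prop)).2 hm2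
    | succ n ih => rw [hrec n]; exact memLp_map_linear (fun i => α n i / lam n) (μ n) ih
  obtain ⟨m, rfl⟩ : ∃ m, k = m + 1 := ⟨k - 1, by omega⟩
  have hpos : ∀ n, 0 < ∑ i, α n i ^ 2 := by
    intro n
    obtain ⟨i, hi⟩ := Function.ne_iff.1 (hα n)
    exact Finset.sum_pos' (fun j _ => sq_nonneg _) ⟨i, Finset.mem_univ i, by
      have : α n i ≠ 0 := hi
      positivity⟩
  have hlpos : ∀ n, 0 < lam n := fun n => by rw [hlam]; exact Real.sqrt_pos.2 (hpos n)
  have hstep : ∀ n, wassersteinDist (μ (n + 1)) (ν (n + 1)) ≤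
      φ n * wassersteinDist (μ n) (ν n) := by
    intro n
    have hsum : ∑ i, (α n i / lam n) ^ 2 = 1 := by
      simp_rw [div_pow]
      rw [← Finset.sum_div, hlam n, Real.sq_sqrt (hpos n).le, div_self (hpos n).ne']
    have h3 : φ n = ∑ i, |α n i / lam n| ^ 3 := by
      rw [hφ n, Finset.sum_div]
      simp_rw [abs_div, abs_of_pos (hlpos n), div_pow]
    rw [h3]
    exact zeroBias_step (fun i => α n i / lam n) hsum (hL2 n) (hrec n) (hzb n) (hzb (n + 1))
  have hφ0 : ∀ n, 0 ≤ φ n := fun n => by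
    rw [hφ n]
    exact div_nonneg (by positivity) (pow_nonneg (hlpos n).le 3)
  intro n _
  induction n with
  | zero => simp
  | succ n ih =>
    refine (hstep n).trans ?_
    rcases Nat.eq_zero_or_pos n with rfl | hn
    · simp
    · rw [Finset.prod_range_succ, mul_comm _ (φ n), mul_assoc]
      exact mul_le_mul_of_nonneg_left (ih hn) (hφ0 n)
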